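/- Let ρ_1, …, ρ_n be states on a finite-dimensional complex Hilbert space H, let σ_1, …, σ_n be positive semidefinite matrices on H with supp ρ_i ⊆ supp σ_i for each i, and let (p_1, …, p_n) be a probability distribution. Then the min-relative entropy is jointly convex: D_min(∑_{i=1}^n p_i ρ_i || ∑_{i=1}^n p_i σ_i) ≤ ∑_{i=1}^n p_i D_min(ρ_i || σ_i). -/

import Mathlib

/-!
Write `P` for the support projection of `∑ pᵢ ρᵢ` and `Pᵢ` for that of `ρᵢ`. If `pᵢ > 0`, then
the support of `ρᵢ` lies in that of the mixture, so `Pᵢ ≤ P` and `Tr (Pᵢ σᵢ) ≤ Tr (P σᵢ)`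
(`trace_suppProj_le`, `suppProj_mul_of_sum`). Summing, `∑ pᵢ Tr (Pᵢ σᵢ) ≤ Tr (P ∑ pᵢ σᵢ)`, and the
claim follows from monotonicity and concavity of the logarithm. All the traces `Tr (Pᵢ σᵢ)` are
strictly positive because `0 ≠ supp ρᵢ ⊆ supp σᵢ` (`trace_suppProj_pos`), so no junk value of the
logarithm occurs.
-/

open scoped ComplexOrder

open Matrix in
/-- The spectral projection of a Hermitian matrix onto the span of its eigenvectors whose
eigenvalues satisfy the predicate `q` (junk value `0` for non-Hermitian input). -/
noncomputable def spectralProj {d : ℕ} (X : Matrix (Fin d) (Fin d) ℂ) (q : ℝ → Prop)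
    [DecidablePred q] : Matrix (Fin d) (Fin d) ℂ :=
  if hX : X.IsHermitian then
    (hX.eigenvectorUnitary : Matrix (Fin d) (Fin d) ℂ) *
      Matrix.diagonal (fun i => if q (hX.eigenvalues i) then (1 : ℂ) else 0) *
      star (hX.eigenvectorUnitary : Matrix (Fin d) (Fin d) ℂ)
  else 0

/-- The orthogonal projection onto the support of a Hermitian matrix. -/
noncomputable def suppProj {d : ℕ} (X : Matrix (Fin d) (Fin d) ℂ) : Matrix (Fin d) (Fin d) ℂ :=
  spectralProj X (fun t => t ≠ 0)

/-- The support (range) of a matrix, as a submodule of `Fin d → ℂ`. -/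
noncomputable def msupp {d : ℕ} (X : Matrix (Fin d) (Fin d) ℂ) : Submodule ℂ (Fin d → ℂ) :=
  LinearMap.range X.mulVecLin

/-- The min-relative entropy `D_min(ρ‖σ) = -log₂ Tr(π_ρ σ)`. -/
noncomputable def Dmin {d : ℕ} (ρ σ : Matrix (Fin d) (Fin d) ℂ) : ℝ :=
  - Real.logb 2 ((suppProj ρ * σ).trace.re)

lemma suppProj_isHermitian {d : ℕ} {X : Matrix (Fin d) (Fin d) ℂ} (hX : X.IsHermitian) :
    (suppProj X).IsHermitian := by
  unfold suppProj spectralProj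
  rw [dif_pos hX, Matrix.star_eq_conjTranspose]
  apply Matrix.isHermitian_mul_mul_conjTranspose
  rw [Matrix.isHermitian_diagonal_iff]
  intro i
  split_ifs <;> simp [IsSelfAdjoint]

lemma spectral_eq {d : ℕ} {X : Matrix (Fin d) (Fin d) ℂ} (hX : X.IsHermitian) :
    X = (hX.eigenvectorUnitary : Matrix (Fin d) (Fin d) ℂ) *
      Matrix.diagonal (fun i => (hX.eigenvalues i : ℂ)) *
      star (hX.eigenvectorUnitary : Matrix (Fin d) (Fin d) ℂ) := by
  have h := hX.spectral_theorem
  rw [Unitary.conjStarAlgAut_apply] at h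
  exact h

/-- Diagonal matrices in the eigenbasis of `X` multiply entrywise. -/
lemma conj_diagonal_mul {d : ℕ} {X : Matrix (Fin d) (Fin d) ℂ} (hX : X.IsHermitian)
    (f g : Fin d → ℂ) :
    ((hX.eigenvectorUnitary : Matrix (Fin d) (Fin d) ℂ) * Matrix.diagonal f *
      star (hX.eigenvectorUnitary : Matrix (Fin d) (Fin d) ℂ)) *
    ((hX.eigenvectorUnitary : Matrix (Fin d) (Fin d) ℂ) * Matrix.diagonal g *
      star (hX.eigenvectorUnitary : Matrix (Fin d) (Fin d) ℂ)) =
    (hX.eigenvectorUnitary : Matrix (Fin d) (Fin d) ℂ) * Matrix.diagonal (fun i => f i * g i) *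
      star (hX.eigenvectorUnitary : Matrix (Fin d) (Fin d) ℂ) := by
  have hU : star (hX.eigenvectorUnitary : Matrix (Fin d) (Fin d) ℂ) *
      (hX.eigenvectorUnitary : Matrix (Fin d) (Fin d) ℂ) = 1 :=
    Unitary.coe_star_mul_self _
  rw [← Matrix.diagonal_mul_diagonal]
  simp only [Matrix.mul_assoc]
  rw [← Matrix.mul_assoc (star _) (hX.eigenvectorUnitary : Matrix (Fin d) (Fin d) ℂ), hU,
    Matrix.one_mul]

lemma suppProj_mul_self {d : ℕ} {X : Matrix (Fin d) (Fin d) ℂ} (hX : X.IsHermitian) :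
    suppProj X * suppProj X = suppProj X := by
  unfold suppProj spectralProj
  rw [dif_pos hX, conj_diagonal_mul]
  congr 3
  ext i
  split_ifs <;> simp

lemma suppProj_mul {d : ℕ} {X : Matrix (Fin d) (Fin d) ℂ} (hX : X.IsHermitian) :
    suppProj X * X = X := by
  conv_lhs => rw [suppProj, spectralProj, dif_pos hX]
  conv_lhs => enter [2]; rw [spectral_eq hX]
  rw [conj_diagonal_mul]
  conv_rhs => rw [spectral_eq hX]
  congr 3
  ext i
  by_cases h : hX.eigenvalues i = 0 <;> simp [h]

/-- The range of the support projection of `X` is contained in the range of `X`. -/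
lemma suppProj_eq_mul {d : ℕ} {X : Matrix (Fin d) (Fin d) ℂ} (hX : X.IsHermitian) :
    ∃ Y, suppProj X = X * Y := by
  -- `Y` is the pseudo-inverse: `0⁻¹ = 0` handles the kernel.
  refine ⟨(hX.eigenvectorUnitary : Matrix (Fin d) (Fin d) ℂ) *
      Matrix.diagonal (fun i => (hX.eigenvalues i : ℂ)⁻¹) *
      star (hX.eigenvectorUnitary : Matrix (Fin d) (Fin d) ℂ), ?_⟩
  conv_rhs => enter [1]; rw [spectral_eq hX]
  rw [conj_diagonal_mul, suppProj, spectralProj, dif_pos hX]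
  congr 3
  ext i
  by_cases h : hX.eigenvalues i = 0 <;> simp [h]

open Matrix in
lemma posSemidef_mul_eq_zero {d : ℕ} {A M : Matrix (Fin d) (Fin d) ℂ} (hA : A.PosSemidef)
    (h : (Mᴴ * A * M).trace = 0) : A * M = 0 := by
  have h0 := (hA.conjTranspose_mul_mul_same M).trace_eq_zero_iff.1 h
  obtain ⟨B, rfl⟩ : ∃ B, A = Bᴴ * B := by
    open scoped MatrixOrder in
    exact (CStarAlgebra.nonneg_iff_eq_star_mul_self (a := A)).1 hA.nonneg
  have h1 : (B * M)ᴴ * (B * M) = 0 := by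
    rw [conjTranspose_mul, ← h0]; simp only [Matrix.mul_assoc]
  rw [Matrix.mul_assoc, conjTranspose_mul_self_eq_zero.1 h1, Matrix.mul_zero]

open Matrix in
lemma trace_proj_mul {d : ℕ} {Q σ : Matrix (Fin d) (Fin d) ℂ} (hQ : Q.IsHermitian)
    (hQ2 : Q * Q = Q) : (Q * σ).trace = (Qᴴ * σ * Q).trace := by
  rw [Matrix.trace_mul_comm (Qᴴ * σ) Q, hQ.eq, ← Matrix.mul_assoc, hQ2]

open Matrix in
lemma trace_proj_nonneg {d : ℕ} {Q σ : Matrix (Fin d) (Fin d) ℂ} (hQ : Q.IsHermitian)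
    (hQ2 : Q * Q = Q) (hσ : σ.PosSemidef) : 0 ≤ (Q * σ).trace := by
  rw [trace_proj_mul hQ hQ2]
  exact (hσ.conjTranspose_mul_mul_same Q).trace_nonneg

open Matrix in
lemma trace_suppProj_pos {d : ℕ} {ρ σ : Matrix (Fin d) (Fin d) ℂ} (hρ : ρ.PosSemidef)
    (hρtr : ρ.trace = 1) (hσ : σ.PosSemidef) (hsupp : msupp ρ ≤ msupp σ) :
    0 < (suppProj ρ * σ).trace.re := by
  have hP := suppProj_isHermitian hρ.1
  have hP2 := suppProj_mul_self hρ.1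
  have hnn := trace_proj_nonneg hP hP2 hσ
  refine lt_of_le_of_ne (Complex.le_def.1 hnn).1 fun h0 => ?_
  have hz : (suppProj ρ * σ).trace = 0 :=
    Complex.ext h0.symm (Complex.le_def.1 hnn).2.symm
  have hσP : σ * suppProj ρ = 0 :=
    posSemidef_mul_eq_zero hσ (by rw [← trace_proj_mul hP hP2, hz])
  have hσρ : σ * ρ = 0 := by
    rw [← suppProj_mul hρ.1, ← Matrix.mul_assoc, hσP, Matrix.zero_mul]
  -- A vector `ρ v = σ w` lies both in the range and in the kernel of the Hermitian `σ`.
  have hρ0 : ρ = 0 := by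
    refine Matrix.ext_of_mulVec_single fun i => ?_
    obtain ⟨w, hw⟩ := hsupp ⟨Pi.single i 1, rfl⟩
    simp only [Matrix.mulVecLin_apply] at hw
    rw [Matrix.zero_mulVec, ← hw, ← Matrix.conjTranspose_mul_self_mulVec_eq_zero, hσ.1.eq,
      ← Matrix.mulVec_mulVec, hw, Matrix.mulVec_mulVec, hσρ, Matrix.zero_mulVec]
  simp [hρ0] at hρtr

/-- The support of a component with positive weight is contained in the support of the mixture. -/
lemma suppProj_mul_of_sum {d n : ℕ} {ρ : Fin n → Matrix (Fin d) (Fin d) ℂ}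
    (hρ : ∀ i, (ρ i).PosSemidef) {p : Fin n → ℝ} (hp : ∀ i, 0 ≤ p i)
    {i : Fin n} (hi : 0 < p i) :
    suppProj (∑ j, p j • ρ j) * suppProj (ρ i) = suppProj (ρ i) := by
  have hS : (∑ j, p j • ρ j).IsHermitian :=
    (Matrix.posSemidef_sum _ fun j _ => (hρ j).smul (hp j)).1
  set S := ∑ j, p j • ρ j with hSdef
  have hPh := suppProj_isHermitian hS
  have hM : (1 - suppProj S).conjTranspose = 1 - suppProj S := by
    rw [Matrix.conjTranspose_sub, Matrix.conjTranspose_one, hPh.eq]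
  have hSM : (1 - suppProj S) * S = 0 := by
    rw [Matrix.sub_mul, suppProj_mul hS, Matrix.one_mul, sub_self]
  have hpsd := fun j => ((hρ j).conjTranspose_mul_mul_same (1 - suppProj S)).trace_nonneg
  have hsum : ∑ j, p j • ((1 - suppProj S).conjTranspose * ρ j * (1 - suppProj S)).trace = 0 := by
    have : ((1 - suppProj S).conjTranspose * S * (1 - suppProj S)).trace = 0 := by
      rw [hM, hSM]; simp
    rw [← this]
    conv_rhs => enter [1, 1, 2]; rw [hSdef]
    simp only [Matrix.mul_sum, Matrix.sum_mul, Matrix.trace_sum, Matrix.mul_smul, Matrix.smul_mul,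
      Matrix.trace_smul]
  have hz := (Finset.sum_eq_zero_iff_of_nonneg
    (fun j _ => smul_nonneg (hp j) (hpsd j))).1 hsum i (Finset.mem_univ i)
  have h0 := (smul_eq_zero.1 hz).resolve_left hi.ne'
  have h1 := posSemidef_mul_eq_zero (hρ i) h0
  have h2 : (1 - suppProj S) * ρ i = 0 := by
    have := congrArg Matrix.conjTranspose h1
    rwa [Matrix.conjTranspose_mul, hM, (hρ i).1.eq, Matrix.conjTranspose_zero] at this
  obtain ⟨Y, hY⟩ := suppProj_eq_mul (hρ i).1
  have h3 : (1 - suppProj S) * suppProj (ρ i) = 0 := by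
    rw [hY, ← Matrix.mul_assoc, h2, Matrix.zero_mul]
  rw [Matrix.sub_mul, Matrix.one_mul, sub_eq_zero] at h3
  exact h3.symm

/-- If `P Q = Q` for orthogonal projections `P` and `Q`, then `P - Q` is again an orthogonal
projection, whence `Tr (Q σ) ≤ Tr (P σ)`. -/
lemma trace_suppProj_le {d : ℕ} {P Q σ : Matrix (Fin d) (Fin d) ℂ} (hP : P.IsHermitian)
    (hP2 : P * P = P) (hQ : Q.IsHermitian) (hQ2 : Q * Q = Q) (hPQ : P * Q = Q)
    (hσ : σ.PosSemidef) : (Q * σ).trace.re ≤ (P * σ).trace.re := by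
  have hQP : Q * P = Q := by
    have := congrArg Matrix.conjTranspose hPQ
    rwa [Matrix.conjTranspose_mul, hP.eq, hQ.eq] at this
  have h := trace_proj_nonneg (hP.sub hQ)
    (by rw [Matrix.sub_mul, Matrix.mul_sub, Matrix.mul_sub, hP2, hQ2, hPQ, hQP]; abel) hσ
  rw [Matrix.sub_mul, Matrix.trace_sub] at h
  have := (Complex.le_def.1 h).1
  simpa using this

/-- joint convexity of the min-relative entropy. -/
theorem stmt7 {d n : ℕ} (ρ σ : Fin n → Matrix (Fin d) (Fin d) ℂ)
    (hρ : ∀ i, (ρ i).PosSemidef) (hρtr : ∀ i, (ρ i).trace = 1)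
    (hσ : ∀ i, (σ i).PosSemidef)
    (hsupp : ∀ i, msupp (ρ i) ≤ msupp (σ i))
    (p : Fin n → ℝ) (hp : ∀ i, 0 ≤ p i) (hp1 : ∑ i, p i = 1) :
    Dmin (∑ i, p i • ρ i) (∑ i, p i • σ i) ≤ ∑ i, p i * Dmin (ρ i) (σ i) := by
  have hpos := fun i => trace_suppProj_pos (hρ i) (hρtr i) (hσ i) (hsupp i)
  have hS : (∑ j, p j • ρ j).IsHermitian :=
    (Matrix.posSemidef_sum _ fun j _ => (hρ j).smul (hp j)).1
  have hle : ∑ i, p i * (suppProj (ρ i) * σ i).trace.re ≤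
      (suppProj (∑ i, p i • ρ i) * ∑ i, p i • σ i).trace.re := by
    simp only [Matrix.mul_sum, Matrix.trace_sum, Matrix.mul_smul, Matrix.trace_smul,
      Complex.re_sum, Complex.smul_re, smul_eq_mul]
    refine Finset.sum_le_sum fun i _ => ?_
    rcases (hp i).eq_or_lt with h0 | h0
    · simp [← h0]
    · exact mul_le_mul_of_nonneg_left (trace_suppProj_le (suppProj_isHermitian hS)
        (suppProj_mul_self hS) (suppProj_isHermitian (hρ i).1) (suppProj_mul_self (hρ i).1)
        (suppProj_mul_of_sum hρ hp h0) (hσ i)) (hp i)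
  have hsum_pos : 0 < ∑ i, p i * (suppProj (ρ i) * σ i).trace.re :=
    (convex_Ioi (0 : ℝ)).sum_mem (fun i _ => hp i) hp1 (fun i _ => hpos i)
  have hlog := strictConcaveOn_log_Ioi.concaveOn.le_map_sum
    (t := Finset.univ) (w := p) (p := fun i => (suppProj (ρ i) * σ i).trace.re)
    (fun i _ => hp i) hp1 (fun i _ => hpos i)
  simp only [smul_eq_mul] at hlog
  have hmain := hlog.trans (Real.log_le_log hsum_pos hle)
  simp only [Dmin, mul_neg, Finset.sum_neg_distrib, neg_le_neg_iff, Real.logb, ← mul_div_assoc,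
    ← Finset.sum_div]
  exact div_le_div_of_nonneg_right hmain (Real.log_pos one_lt_two).le
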